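/- Let A be the generator of a holomorphic semigroup T on a complex Banach space X. Assume there exists ε > 0 such that σ(A) ∩ {λ ∈ ℂ : Re λ ≥ −ε} = {0}, and that 0 is a pole of order 1 of the resolvent λ ↦ R(λ,A), with residue P (the spectral projection of A associated with {0}). Then T(t)P = P for all t > 0, and there exist constants M ≥ 1 and ε' > 0 such that ‖T(t) − P‖ ≤ M e^{−ε' t} for all t > 0. -/

import Mathlib

open MeasureTheory Set

variable {X : Type*} [NormedAddCommGroup X] [NormedSpace ℂ X] [CompleteSpace X]

/-- `R` is the resolvent operator `R(l, A) = (l - A)⁻¹` of the (unbounded) operator `A`. -/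
def IsResolventOf (A : X →ₗ.[ℂ] X) (l : ℂ) (R : X →L[ℂ] X) : Prop :=
  (∀ x : X, ∃ hx : R x ∈ A.domain, l • R x - A ⟨R x, hx⟩ = x) ∧
  (∀ y : A.domain, R (l • (y : X) - A y) = (y : X))

/-- `T` is a semigroup of type `(M, ω)`. -/
def IsSemigroupOfType (T : ℝ → X →L[ℂ] X) (M ω : ℝ) : Prop :=
  (∀ x : X, ContinuousOn (fun t => T t x) (Set.Ioi 0)) ∧
  (∀ s t : ℝ, 0 < s → 0 < t → T (s + t) = (T s).comp (T t)) ∧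
  (0 < M ∧ ∀ t : ℝ, 0 < t → ‖T t‖ ≤ M * Real.exp (ω * t)) ∧
  (∀ x : X, (∀ t : ℝ, 0 < t → T t x = 0) → x = 0)

/-- `A` is the generator of the semigroup `T` of type `(M, ω)`. -/
def IsGeneratorOf (A : X →ₗ.[ℂ] X) (T : ℝ → X →L[ℂ] X) (ω : ℝ) : Prop :=
  ∀ l : ℝ, ω < l → ∃ R : X →L[ℂ] X, IsResolventOf A (l : ℂ) R ∧
    ∀ x : X, R x = ∫ t in Set.Ioi (0 : ℝ), Real.exp (-l * t) • T t x

/-- `A` generates the semigroup `T` (of some type `(M, ω)`). -/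
def Generates (A : X →ₗ.[ℂ] X) (T : ℝ → X →L[ℂ] X) : Prop :=
  ∃ M ω : ℝ, IsSemigroupOfType T M ω ∧ IsGeneratorOf A T ω

/-- The open sector `Σ_θ = {r e^{iφ} : r > 0, |φ| < θ}`. -/
def Sector (θ : ℝ) : Set ℂ := {z : ℂ | z ≠ 0 ∧ |Complex.arg z| < θ}

/-- The semigroup `T` is holomorphic: it extends to a holomorphic function on a sector
`Σ_θ` (for some `0 < θ ≤ π/2`) which is bounded on `Σ_θ ∩ {|z| ≤ 1}`. -/
def IsHolomorphicSG (T : ℝ → X →L[ℂ] X) : Prop :=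
  ∃ θ : ℝ, 0 < θ ∧ θ ≤ Real.pi / 2 ∧ ∃ S : ℂ → X →L[ℂ] X,
    DifferentiableOn ℂ S (Sector θ) ∧
    (∀ t : ℝ, 0 < t → S (t : ℂ) = T t) ∧
    (∃ C : ℝ, ∀ z ∈ Sector θ, ‖z‖ ≤ 1 → ‖S z‖ ≤ C)

/-- The spectrum of the (unbounded) operator `A`: the complement of the resolvent set. -/
def spectrumOf (A : X →ₗ.[ℂ] X) : Set ℂ :=
  {l : ℂ | ¬ ∃ R : X →L[ℂ] X, IsResolventOf A l R}

section Helpers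

open Filter Topology

variable {E : Type*} [NormedAddCommGroup E] [NormedSpace ℂ E] [CompleteSpace E]

lemma aux_expc (μ : ℝ) : Continuous (fun t : ℝ => Real.exp (-μ * t)) := by fun_prop

lemma aux_integrable (F : ℝ → E) (M ω μ : ℝ) (hc : ContinuousOn F (Ioi 0))
    (hb : ∀ t, 0 < t → ‖F t‖ ≤ M * Real.exp (ω * t)) (hμ : ω < μ) :
    IntegrableOn (fun t => Real.exp (-μ * t) • F t) (Ioi 0) := by
  have h1 : IntegrableOn (fun t : ℝ => M * Real.exp ((ω - μ) * t)) (Ioi 0) :=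
    (integrableOn_exp_mul_Ioi (by linarith) 0).const_mul M
  refine Integrable.mono' h1 ?_ ?_
  · refine ContinuousOn.aestronglyMeasurable ?_ measurableSet_Ioi
    exact (aux_expc μ).continuousOn.smul hc
  · refine (ae_restrict_iff' measurableSet_Ioi).2 (Eventually.of_forall fun t ht => ?_)
    rw [norm_smul, Real.norm_eq_abs, abs_of_pos (Real.exp_pos _)]
    calc Real.exp (-μ * t) * ‖F t‖ ≤ Real.exp (-μ * t) * (M * Real.exp (ω * t)) := by
          gcongr
          exact hb t ht
      _ = M * Real.exp ((ω - μ) * t) := by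
          rw [show (ω - μ) * t = -μ * t + ω * t by ring, Real.exp_add]; ring

lemma aux_shift (F : ℝ → E) (μ t : ℝ) :
    ∫ s in Ioi (0 : ℝ), Real.exp (-μ * s) • F (s + t) =
      Real.exp (μ * t) • ∫ s in Ioi t, Real.exp (-μ * s) • F s := by
  have h := (measurePreserving_add_right (volume : Measure ℝ) t).setIntegral_preimage_emb
    (measurableEmbedding_addRight t) (fun s => Real.exp (-μ * s) • F s) (Ioi t)
  rw [← h, ← integral_smul]
  have : (fun x => x + t) ⁻¹' Ioi t = Ioi (0 : ℝ) := by ext x; simp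
  rw [this]
  congr 1
  ext s
  rw [smul_smul, ← Real.exp_add]
  congr 2
  ring

lemma aux_deriv (F : ℝ → E) (M ω μ : ℝ) (hc : ContinuousOn F (Ioi 0))
    (hb : ∀ t, 0 < t → ‖F t‖ ≤ M * Real.exp (ω * t)) (hμ : ω < μ) (t : ℝ) (ht : 0 < t) :
    HasDerivAt (fun u => ∫ s in Ioi u, Real.exp (-μ * s) • F s) (-(Real.exp (-μ * t) • F t)) t := by
  have hi := aux_integrable F M ω μ hc hb hμ
  have hk : ContinuousOn (fun t => Real.exp (-μ * t) • F t) (Ioi 0) :=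
    (aux_expc μ).continuousOn.smul hc
  have h := intervalIntegral.integral_hasDerivAt_right (a := 0) (b := t)
    (f := fun t => Real.exp (-μ * t) • F t)
    ((intervalIntegrable_iff_integrableOn_Ioc_of_le ht.le).2 (hi.mono_set Ioc_subset_Ioi_self))
    (hk.stronglyMeasurableAtFilter isOpen_Ioi t ht) (hk.continuousAt (Ioi_mem_nhds ht))
  have h2 := h.const_sub (∫ s in Ioi (0 : ℝ), Real.exp (-μ * s) • F s)
  refine h2.congr_of_eventuallyEq ?_
  filter_upwards [Ioi_mem_nhds ht] with u hu
  rw [← intervalIntegral.integral_Ioi_sub_Ioi hi (le_of_lt hu)]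
  simp

lemma aux_key (F : ℝ → E) (M ω μ : ℝ) (hc : ContinuousOn F (Ioi 0))
    (hb : ∀ t, 0 < t → ‖F t‖ ≤ M * Real.exp (ω * t)) (hμ : ω < μ) (c : ℂ) (hc0 : c ≠ 0)
    (h : ∀ t, 0 < t → c • F t = ∫ s in Ioi (0 : ℝ), Real.exp (-μ * s) • F (s + t)) (t : ℝ)
    (ht : 0 < t) :
    c • F t = Complex.exp ((μ - c⁻¹) * t) • ∫ s in Ioi (0 : ℝ), Real.exp (-μ * s) • F s := by
  have hi := aux_integrable F M ω μ hc hb hμ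
  set g : ℝ → E := fun u => ∫ s in Ioi u, Real.exp (-μ * s) • F s with hg
  have hgc : ∀ t, 0 < t → c • F t = Real.exp (μ * t) • g t := by
    intro t ht
    rw [h t ht, aux_shift]
  have hF : ∀ t, 0 < t → Real.exp (-μ * t) • F t = c⁻¹ • g t := by
    intro t ht
    have : F t = c⁻¹ • (Real.exp (μ * t) • g t) := by
      rw [← hgc t ht, smul_smul, inv_mul_cancel₀ hc0, one_smul]
    rw [this, smul_comm, smul_smul (Real.exp _), ← Real.exp_add]
    simp
  set k : ℝ → E := fun u => Complex.exp (c⁻¹ * u) • g u with hk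
  have hkd : ∀ t, 0 < t → HasDerivAt k 0 t := by
    intro t ht
    have h1 := aux_deriv F M ω μ hc hb hμ t ht
    rw [hF t ht] at h1
    have h2 : HasDerivAt (fun u : ℝ => Complex.exp (c⁻¹ * u)) (Complex.exp (c⁻¹ * t) * (c⁻¹ * 1)) t :=
      ((Complex.ofRealCLM.hasDerivAt (x := t)).const_mul c⁻¹).cexp
    have h3 := h2.smul h1
    have h4 : Complex.exp (c⁻¹ * t) • -(c⁻¹ • g t) + (Complex.exp (c⁻¹ * t) * (c⁻¹ * 1)) • g t
        = 0 := by
      rw [smul_neg, mul_one, smul_smul, neg_add_cancel]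
    exact h4 ▸ h3
  have hkc : ContinuousOn k (Ici 0) :=
    (Continuous.continuousOn (by fun_prop)).smul hi.continuousOn_Ici_primitive_Ioi
  have hconst : ∀ δ ∈ Ioc 0 t, k t = k δ := by
    intro δ hδ
    refine constant_of_has_deriv_right_zero (a := δ) (b := t)
      (hkc.mono fun x hx => hδ.1.le.trans hx.1) (fun x hx => ?_) t ⟨hδ.2, le_rfl⟩
    exact (hkd x (hδ.1.trans_le hx.1)).hasDerivWithinAt
  have hk0 : k t = k 0 := by
    have h1 : Tendsto k (𝓝[>] 0) (𝓝 (k 0)) :=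
      (hkc 0 self_mem_Ici).mono_left (nhdsWithin_mono _ Ioi_subset_Ici_self)
    have h2 : Tendsto k (𝓝[>] 0) (𝓝 (k t)) := by
      refine tendsto_const_nhds.congr' ?_
      filter_upwards [Ioc_mem_nhdsGT ht] with δ hδ using hconst δ hδ
    exact tendsto_nhds_unique h2 h1
  have hgt : g t = Complex.exp (-(c⁻¹ * t)) • g 0 := by
    have : k 0 = g 0 := by simp [hk]
    rw [← this, ← hk0, hk]
    simp only
    rw [smul_smul, ← Complex.exp_add]
    simp
  rw [hgc t ht, hgt, ← Complex.coe_smul, smul_smul, Complex.ofReal_exp, ← Complex.exp_add]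
  congr 2
  push_cast
  ring

lemma aux_key0 (F : ℝ → E) (M ω μ : ℝ) (hc : ContinuousOn F (Ioi 0))
    (hb : ∀ t, 0 < t → ‖F t‖ ≤ M * Real.exp (ω * t)) (hμ : ω < μ)
    (h : ∀ t, 0 < t → 0 = ∫ s in Ioi (0 : ℝ), Real.exp (-μ * s) • F (s + t)) (t : ℝ)
    (ht : 0 < t) : F t = 0 := by
  have h0 : ∀ t, 0 < t → ∫ s in Ioi t, Real.exp (-μ * s) • F s = 0 := by
    intro t ht
    have := h t ht
    rw [aux_shift] at this
    exact (smul_eq_zero.1 this.symm).resolve_left (Real.exp_pos _).ne'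
  have h1 := aux_deriv F M ω μ hc hb hμ t ht
  have h2 : HasDerivAt (fun u => ∫ s in Ioi u, Real.exp (-μ * s) • F s) 0 t := by
    refine (hasDerivAt_const t (0 : E)).congr_of_eventuallyEq ?_
    filter_upwards [Ioi_mem_nhds ht] with u hu using h0 u hu
  have h3 := h1.unique h2
  exact (smul_eq_zero.1 (neg_eq_zero.1 h3)).resolve_left (Real.exp_pos _).ne'

/-- The Gelfand-theoretic heart: in a commutative Banach algebra. -/
lemma aux_char {𝒜 : Type*} [NormedCommRing 𝒜] [NormedAlgebra ℂ 𝒜] [CompleteSpace 𝒜]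
    (T : ℝ → 𝒜) (M ω μ ε : ℝ) (hc : ContinuousOn T (Ioi 0))
    (hm : ∀ s t, 0 < s → 0 < t → T (s + t) = T s * T t)
    (hb : ∀ t, 0 < t → ‖T t‖ ≤ M * Real.exp (ω * t)) (hμ : ω < μ) (hμ0 : 0 < μ) (hε : 0 < ε)
    (R₀ P : 𝒜) (hR : R₀ = ∫ t in Ioi (0 : ℝ), Real.exp (-μ * t) • T t)
    (R : ℂ → 𝒜)
    (hres : ∀ l : ℂ, l ≠ 0 → -ε ≤ l.re → R l * (1 - ((μ : ℂ) - l) • R₀) = R₀)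
    (hP : Tendsto (fun l : ℂ => l • R l) (𝓝[≠] 0) (𝓝 P))
    (χ : WeakDual.characterSpace ℂ 𝒜) : ‖χ (T 1 * (1 - P))‖ ≤ Real.exp (-ε) := by
  set L : 𝒜 →L[ℂ] ℂ := WeakDual.CharacterSpace.toCLM χ with hL
  have hLχ : ∀ a, L a = χ a := fun a => rfl
  have hχc : Continuous χ := L.continuous
  set c : ℂ := χ R₀ with hcdef
  have hint := aux_integrable T M ω μ hc hb hμ
  have hcint : c = ∫ t in Ioi (0 : ℝ), Real.exp (-μ * t) • χ (T t) := by
    rw [hcdef, hR, ← hLχ, ← L.integral_comp_comm hint]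
    congr 1
    ext t
    rw [← hLχ, ← Complex.coe_smul, map_smul, Complex.coe_smul]
  have hfc : ContinuousOn (fun t => χ (T t)) (Ioi 0) := hχc.comp_continuousOn hc
  have hfb : ∀ t, 0 < t → ‖χ (T t)‖ ≤ (‖L‖ * M) * Real.exp (ω * t) := by
    intro t ht
    calc ‖χ (T t)‖ ≤ ‖L‖ * ‖T t‖ := L.le_opNorm _
      _ ≤ ‖L‖ * (M * Real.exp (ω * t)) := by gcongr; exact hb t ht
      _ = _ := by ring
  have hf : ∀ t, 0 < t → c • χ (T t) =
      ∫ s in Ioi (0 : ℝ), Real.exp (-μ * s) • χ (T (s + t)) := by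
    intro t ht
    rw [hcint, smul_eq_mul, ← integral_mul_const]
    refine setIntegral_congr_fun measurableSet_Ioi fun s hs => ?_
    rw [hm s t hs ht, map_mul, smul_mul_assoc]
  -- resolvent values
  have hresχ : ∀ l : ℂ, l ≠ 0 → -ε ≤ l.re → χ (R l) * (1 - ((μ : ℂ) - l) * c) = c := by
    intro l hl hl2
    have := congrArg χ (hres l hl hl2)
    simpa [map_mul, map_sub, map_smul] using this
  have hev : ∀ᶠ l : ℂ in 𝓝[≠] 0, l ≠ 0 ∧ -ε ≤ l.re := by
    have h1 : ∀ᶠ l : ℂ in 𝓝 0, -ε < l.re :=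
      Complex.continuous_re.continuousAt.eventually (lt_mem_nhds (by simpa using hε))
    filter_upwards [self_mem_nhdsWithin, nhdsWithin_le_nhds h1] with l h h' using ⟨h, h'.le⟩
  have hPχ : Tendsto (fun l : ℂ => l * χ (R l)) (𝓝[≠] 0) (𝓝 (χ P)) := by
    have := (hχc.tendsto P).comp hP
    refine this.congr fun l => ?_
    simp [map_smul]
  have hl0 : Tendsto (fun l : ℂ => l) (𝓝[≠] 0) (𝓝 0) := nhdsWithin_le_nhds
  have hP1 : χ P * (1 - μ * c) = 0 := by
    have h1 : Tendsto (fun l : ℂ => l * χ (R l) * (1 - ((μ : ℂ) - l) * c)) (𝓝[≠] 0)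
        (𝓝 (χ P * (1 - ((μ : ℂ) - 0) * c))) :=
      hPχ.mul (tendsto_const_nhds.sub ((tendsto_const_nhds.sub hl0).mul tendsto_const_nhds))
    have h2 : Tendsto (fun l : ℂ => l * χ (R l) * (1 - ((μ : ℂ) - l) * c)) (𝓝[≠] 0)
        (𝓝 (0 * c)) := by
      refine (hl0.mul tendsto_const_nhds).congr' ?_
      filter_upwards [hev] with l hl
      rw [mul_assoc, hresχ l hl.1 hl.2]
    have := tendsto_nhds_unique h1 h2
    simpa using this
  rw [map_mul, map_sub, map_one]
  have hμC : (μ : ℂ) ≠ 0 := by exact_mod_cast hμ0.ne'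
  by_cases hc0 : c = 0
  · have : χ (T 1) = 0 := aux_key0 (fun t => χ (T t)) _ ω μ hfc hfb hμ
      (fun t ht => by rw [← hf t ht, hc0, zero_smul]) 1 one_pos
    rw [this, zero_mul, norm_zero]
    exact (Real.exp_pos _).le
  by_cases hc1 : (μ : ℂ) * c = 1
  · -- a = 0
    have hP2 : χ P = 1 := by
      refine tendsto_nhds_unique hPχ (tendsto_const_nhds.congr' ?_)
      filter_upwards [hev] with l hl
      have h1 := hresχ l hl.1 hl.2
      have h2 : χ (R l) * l * c = c := by
        rw [sub_mul, hc1] at h1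
        linear_combination h1
      have := mul_right_cancel₀ hc0 (h2.trans (one_mul c).symm)
      rw [mul_comm, this]
    rw [hP2]
    simp [(Real.exp_pos _).le]
  · have hP0 : χ P = 0 := (mul_eq_zero.1 hP1).resolve_right fun h => hc1 (sub_eq_zero.1 h).symm
    have hk := aux_key (fun t => χ (T t)) _ ω μ hfc hfb hμ c hc0 hf 1 one_pos
    rw [← hcint, smul_eq_mul, smul_eq_mul, mul_comm] at hk
    have hk1 := mul_right_cancel₀ hc0 hk
    set a : ℂ := μ - c⁻¹ with ha
    have ha0 : a ≠ 0 := by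
      intro h
      apply hc1
      rw [sub_eq_zero.1 (ha.symm.trans h), inv_mul_cancel₀ hc0]
    have hre : a.re < -ε := by
      by_contra hcon
      have h1 := hresχ a ha0 (not_lt.1 hcon)
      rw [ha, sub_sub_cancel, inv_mul_cancel₀ hc0, sub_self, mul_zero] at h1
      exact hc0 h1.symm
    rw [hP0, hk1, sub_zero, mul_one, Complex.norm_exp]
    simpa using hre.le

lemma aux_gelfand {𝒜 : Type*} [NormedRing 𝒜] [NormedAlgebra ℂ 𝒜] [CompleteSpace 𝒜]
    (a : 𝒜) (q q' : ℝ) (hq : 0 ≤ q) (hqq : q < q') (h : ∀ z ∈ spectrum ℂ a, ‖z‖ ≤ q) :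
    ∃ C : ℝ, 0 < C ∧ ∀ n : ℕ, ‖a ^ n‖ ≤ C * q' ^ n := by
  have hq'0 : 0 < q' := hq.trans_lt hqq
  have hs : spectralRadius ℂ a ≤ ENNReal.ofReal q := by
    refine iSup₂_le fun z hz => ?_
    rw [← enorm_eq_nnnorm, ← ofReal_norm]
    exact ENNReal.ofReal_le_ofReal (h z hz)
  have hs' : spectralRadius ℂ a < ENNReal.ofReal q' :=
    hs.trans_lt ((ENNReal.ofReal_lt_ofReal_iff hq'0).2 hqq)
  have hev := (spectrum.pow_norm_pow_one_div_tendsto_nhds_spectralRadius a).eventually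
    (gt_mem_nhds hs')
  have hO : (fun n : ℕ => a ^ n) =O[atTop] (fun n : ℕ => q' ^ n) := by
    refine Asymptotics.IsBigO.of_bound 1 ?_
    filter_upwards [hev, eventually_gt_atTop 0] with n hn hn0
    have h1 := (ENNReal.ofReal_lt_ofReal_iff hq'0).1 hn
    have h2 := pow_le_pow_left₀ (by positivity) h1.le n
    rw [one_div, Real.rpow_inv_natCast_pow (norm_nonneg _) hn0.ne'] at h2
    rw [one_mul, Real.norm_eq_abs, abs_of_pos (by positivity)]
    exact h2
  obtain ⟨C, hC, hC'⟩ := Asymptotics.bound_of_isBigO_nat_atTop hO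
  refine ⟨C, hC, fun n => ?_⟩
  have := hC' (x := n) (by positivity)
  rwa [Real.norm_eq_abs, abs_of_pos (by positivity)] at this

lemma aux_alg {ℬ : Type*} [NormedRing ℬ] [NormedAlgebra ℂ ℬ] [CompleteSpace ℬ]
    (T : ℝ → ℬ) (M ω μ ε : ℝ) (hc : ContinuousOn T (Ioi 0))
    (hm : ∀ s t, 0 < s → 0 < t → T (s + t) = T s * T t)
    (hb : ∀ t, 0 < t → ‖T t‖ ≤ M * Real.exp (ω * t)) (hμ : ω < μ) (hμ0 : 0 < μ) (hε : 0 < ε)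
    (R₀ P : ℬ) (hR : R₀ = ∫ t in Ioi (0 : ℝ), Real.exp (-μ * t) • T t)
    (hTR : ∀ t, 0 < t → T t * R₀ = R₀ * T t)
    (R : ℂ → ℬ)
    (hres : ∀ l : ℂ, l ≠ 0 → -ε ≤ l.re → R l * (1 - ((μ : ℂ) - l) • R₀) = R₀)
    (hres' : ∀ l : ℂ, l ≠ 0 → -ε ≤ l.re → (1 - ((μ : ℂ) - l) • R₀) * R l = R₀)
    (hP : Tendsto (fun l : ℂ => l • R l) (𝓝[≠] 0) (𝓝 P)) :
    (∀ t, 0 < t → T t * P = P * T t) ∧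
    ∃ C : ℝ, 0 < C ∧ ∀ n : ℕ, ‖(T 1 * (1 - P)) ^ n‖ ≤ C * Real.exp (-(ε / 2)) ^ n := by
  set G : Set ℬ := insert R₀ (T '' Ioi 0) with hG
  have hcomm : ∀ x ∈ G, ∀ y ∈ G, x * y = y * x := by
    rintro x (rfl | ⟨s, hs, rfl⟩) y (rfl | ⟨t, ht, rfl⟩)
    · rfl
    · exact (hTR t ht).symm
    · exact hTR s hs
    · rw [← hm s t hs ht, ← hm t s ht hs, add_comm]
  have hRcomm : ∀ l : ℂ, l ≠ 0 → -ε ≤ l.re → ∀ b, R₀ * b = b * R₀ → R l * b = b * R l := by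
    intro l hl hl2 b hbR
    have h1 := hres l hl hl2
    have h2 := hres' l hl hl2
    set V := 1 - ((μ : ℂ) - l) • R₀ with hV
    have hVb : V * b = b * V := by
      rw [hV, sub_mul, mul_sub, one_mul, mul_one, smul_mul_assoc, mul_smul_comm, hbR]
    have hVU : V * (1 + ((μ : ℂ) - l) • R l) = 1 := by
      rw [mul_add, mul_one, mul_smul_comm, h2, hV]; abel
    have hRU : R₀ * (1 + ((μ : ℂ) - l) • R l) = R l := by
      rw [← h1, mul_assoc, hVU, mul_one]
    calc R l * b = R l * b * (V * (1 + ((μ : ℂ) - l) • R l)) := by rw [hVU, mul_one]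
      _ = R l * (b * V) * (1 + ((μ : ℂ) - l) • R l) := by simp only [mul_assoc]
      _ = (R l * V) * b * (1 + ((μ : ℂ) - l) • R l) := by rw [← hVb]; simp only [mul_assoc]
      _ = b * (R₀ * (1 + ((μ : ℂ) - l) • R l)) := by rw [h1, hbR, mul_assoc]
      _ = b * R l := by rw [hRU]
  let S : Subalgebra ℂ ℬ := Subalgebra.centralizer ℂ (Set.centralizer G)
  have hSc : IsClosed (S : Set ℬ) := Set.isClosed_centralizer _
  have hScomm : ∀ a ∈ S, ∀ b ∈ S, a * b = b * a := fun a ha b hb =>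
    Set.centralizer_centralizer_comm_of_comm hcomm a ha b hb
  have hGS : ∀ a ∈ G, a ∈ S := fun a ha => Set.subset_centralizer_centralizer ha
  have hTS : ∀ t, 0 < t → T t ∈ S := fun t ht => hGS _ (Or.inr ⟨t, ht, rfl⟩)
  have hR0S : R₀ ∈ S := hGS _ (Or.inl rfl)
  have hRS : ∀ l : ℂ, l ≠ 0 → -ε ≤ l.re → R l ∈ S := by
    intro l hl hl2 b hb
    exact (hRcomm l hl hl2 b (hb R₀ (Or.inl rfl))).symm
  have hev : ∀ᶠ l : ℂ in 𝓝[≠] 0, l ≠ 0 ∧ -ε ≤ l.re := by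
    have h1 : ∀ᶠ l : ℂ in 𝓝 0, -ε < l.re :=
      Complex.continuous_re.continuousAt.eventually (lt_mem_nhds (by simpa using hε))
    filter_upwards [self_mem_nhdsWithin, nhdsWithin_le_nhds h1] with l h h' using ⟨h, h'.le⟩
  have hPS : P ∈ S := by
    refine hSc.mem_of_tendsto hP ?_
    filter_upwards [hev] with l hl using S.smul_mem (hRS l hl.1 hl.2) l
  refine ⟨fun t ht => hScomm _ (hTS t ht) _ hPS, ?_⟩
  let _ : NormedCommRing S :=
    { (inferInstance : NormedRing S) with
      mul_comm := fun a b => Subtype.ext (hScomm a a.2 b b.2) }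
  have : CompleteSpace S := hSc.completeSpace_coe
  classical
  let T' : ℝ → S := fun t => if h : 0 < t then ⟨T t, hTS t h⟩ else 0
  let R' : ℂ → S := fun l => if h : l ≠ 0 ∧ -ε ≤ l.re then ⟨R l, hRS l h.1 h.2⟩ else 0
  have hT' : ∀ t, 0 < t → (T' t : ℬ) = T t := fun t ht => by simp [T', ht]
  have hR' : ∀ l, l ≠ 0 → -ε ≤ l.re → (R' l : ℬ) = R l := fun l h1 h2 => by simp [R', h1, h2]
  have hc' : ContinuousOn T' (Ioi 0) := by
    rw [continuousOn_iff_continuous_domRestrict] at hc ⊢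
    refine continuous_induced_rng.2 (hc.congr fun t => ?_)
    exact (hT' t t.2).symm
  have hb' : ∀ t, 0 < t → ‖T' t‖ ≤ M * Real.exp (ω * t) := fun t ht => by
    have := hb t ht
    rw [← hT' t ht] at this
    exact this
  have hkey := aux_char T' M ω μ ε hc'
    (fun s t hs ht => Subtype.ext (by
      rw [hT' _ (add_pos hs ht), hm s t hs ht, ← hT' s hs, ← hT' t ht]; rfl))
    hb' hμ hμ0 hε ⟨R₀, hR0S⟩ ⟨P, hPS⟩ (by
      have hint := aux_integrable T' M ω μ hc' hb' hμ
      apply Subtype.ext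
      have h1 := S.toSubmodule.subtypeL.integral_comp_comm hint
      change R₀ = S.toSubmodule.subtypeL _
      rw [← h1, hR]
      refine setIntegral_congr_fun measurableSet_Ioi fun s hs => ?_
      change Real.exp (-μ * s) • T s = S.toSubmodule.subtypeL (Real.exp (-μ * s) • T' s)
      rw [← hT' s hs]
      rfl) R'
    (fun l h1 h2 => Subtype.ext (by
      have := hres l h1 h2
      rw [← hR' l h1 h2] at this
      exact this))
    (by
      refine tendsto_subtype_rng.2 (hP.congr' ?_)
      filter_upwards [hev] with l hl
      rw [← hR' l hl.1 hl.2]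
      rfl)
  obtain ⟨C, hC, hC'⟩ := aux_gelfand (T' 1 * (1 - ⟨P, hPS⟩)) (Real.exp (-ε))
    (Real.exp (-(ε / 2))) (Real.exp_pos _).le (Real.exp_lt_exp.2 (by linarith)) (by
      intro z hz
      obtain ⟨χ, rfl⟩ := WeakDual.CharacterSpace.mem_spectrum_iff_exists.1 hz
      exact hkey χ)
  refine ⟨C, hC, fun n => ?_⟩
  have h1 := hC' n
  rw [← hT' 1 one_pos]
  exact h1

lemma aux_resid (A : E →ₗ.[ℂ] E) {l m : ℂ} {R₁ R₂ : E →L[ℂ] E} (h1 : IsResolventOf A l R₁)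
    (h2 : IsResolventOf A m R₂) : R₁ = R₂ + (m - l) • (R₂ * R₁) := by
  ext x
  obtain ⟨hx, hx2⟩ := h1.1 x
  have h3 := h2.2 ⟨R₁ x, hx⟩
  have h4 : A ⟨R₁ x, hx⟩ = l • R₁ x - x := eq_sub_of_add_eq ((add_comm _ _).trans (sub_eq_iff_eq_add.1 hx2).symm)
  rw [h4] at h3
  have h5 : m • R₁ x - (l • R₁ x - x) = x + (m - l) • R₁ x := by rw [sub_smul]; abel
  change R₂ (m • R₁ x - (l • R₁ x - x)) = R₁ x at h3
  rw [h5, map_add, map_smul] at h3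
  exact h3.symm

end Helpers

open Filter Topology in
/-- if `A` generates a holomorphic semigroup `T`, the spectrum of `A` in the
half plane `{Re λ ≥ -ε}` is exactly `{0}`, and `0` is a first order pole of the resolvent
with residue `P` (so that near `0` the resolvent has the Laurent expansion
`R(λ, A) = λ⁻¹ P + ∑_{n ≥ 0} λ^n B_n` with `P ≠ 0`), then `T(t) P = P` for all `t > 0` and
`‖T(t) - P‖ ≤ M e^{-ε' t}` for some `M ≥ 1`, `ε' > 0` and all `t > 0`. -/
theorem convergence_to_spectral_projection
    (A : X →ₗ.[ℂ] X) (T : ℝ → X →L[ℂ] X) (P : X →L[ℂ] X)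
    (hgen : Generates A T) (hhol : IsHolomorphicSG T)
    (ε : ℝ) (hε : 0 < ε)
    (hspec : spectrumOf A ∩ {l : ℂ | -ε ≤ l.re} = {0})
    (hP : P ≠ 0)
    (hpole : ∃ r : ℝ, 0 < r ∧ ∃ B : ℕ → X →L[ℂ] X,
      ∀ l : ℂ, l ≠ 0 → ‖l‖ < r →
        ∃ R : X →L[ℂ] X, IsResolventOf A l R ∧
          HasSum (fun n : ℕ => l ^ n • B n) (R - l⁻¹ • P)) :
    (∀ t : ℝ, 0 < t → (T t).comp P = P) ∧
    (∃ M ε' : ℝ, 1 ≤ M ∧ 0 < ε' ∧ ∀ t : ℝ, 0 < t →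
      ‖T t - P‖ ≤ M * Real.exp (-ε' * t)) := by
  obtain ⟨M, ω, ⟨hTc, hTm, ⟨hM, hTb⟩, hTinj⟩, hG⟩ := hgen
  obtain ⟨θ, hθ, -, S, hS, hST, -⟩ := hhol
  -- norm continuity
  have hc : ContinuousOn T (Ioi 0) := by
    have h1 : ContinuousOn (fun t : ℝ => S (t : ℂ)) (Ioi 0) := by
      refine hS.continuousOn.comp Complex.continuous_ofReal.continuousOn fun t ht => ?_
      have ht' : (0 : ℝ) < t := ht
      refine ⟨by exact_mod_cast ht'.ne', ?_⟩
      rw [Complex.arg_ofReal_of_nonneg ht'.le, abs_zero]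
      exact hθ
    exact h1.congr fun t ht => (hST t ht).symm
  set μ : ℝ := max ω 0 + 1 with hμdef
  have hμ : ω < μ := by rw [hμdef]; linarith [le_max_left ω 0]
  have hμ0 : 0 < μ := by rw [hμdef]; linarith [le_max_right ω 0]
  have hμC : (μ : ℂ) ≠ 0 := by exact_mod_cast hμ0.ne'
  obtain ⟨R₀, hR0, hR0i⟩ := hG μ hμ
  have hm : ∀ s t, 0 < s → 0 < t → T (s + t) = T s * T t := hTm
  have hint := aux_integrable T M ω μ hc hTb hμ
  have hintx : ∀ x, IntegrableOn (fun t => Real.exp (-μ * t) • T t x) (Ioi 0) := fun x =>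
    hint.apply_continuousLinearMap x
  have hR : R₀ = ∫ t in Ioi (0 : ℝ), Real.exp (-μ * t) • T t := by
    ext x
    rw [hR0i, ContinuousLinearMap.integral_apply hint]
    rfl
  have hTR : ∀ t, 0 < t → T t * R₀ = R₀ * T t := by
    intro t ht
    ext x
    change T t (R₀ x) = R₀ (T t x)
    rw [hR0i, hR0i, ← (T t).integral_comp_comm (hintx x)]
    refine setIntegral_congr_fun measurableSet_Ioi fun s hs => ?_
    change T t (Real.exp (-μ * s) • T s x) = Real.exp (-μ * s) • (T s * T t) x
    rw [← hm s t hs ht, add_comm, hm t s ht hs, ← Complex.coe_smul, map_smul, Complex.coe_smul]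
    rfl
  have hex : ∀ l : ℂ, l ≠ 0 → -ε ≤ l.re → ∃ R : X →L[ℂ] X, IsResolventOf A l R := by
    intro l hl hl2
    by_contra hcon
    have : l ∈ spectrumOf A ∩ {l : ℂ | -ε ≤ l.re} := ⟨hcon, hl2⟩
    rw [hspec] at this
    exact hl this
  classical
  let R : ℂ → X →L[ℂ] X := fun l =>
    if h : l ≠ 0 ∧ -ε ≤ l.re then (hex l h.1 h.2).choose else 0
  have hRr : ∀ l : ℂ, l ≠ 0 → -ε ≤ l.re → IsResolventOf A l (R l) := by
    intro l h1 h2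
    have : R l = (hex l h1 h2).choose := dif_pos ⟨h1, h2⟩
    rw [this]
    exact (hex l h1 h2).choose_spec
  have hres : ∀ l : ℂ, l ≠ 0 → -ε ≤ l.re → R l * (1 - ((μ : ℂ) - l) • R₀) = R₀ := by
    intro l h1 h2
    have h := aux_resid A hR0 (hRr l h1 h2)
    rw [mul_sub, mul_one, mul_smul_comm]
    conv_rhs => rw [h]
    rw [← neg_sub (μ : ℂ) l, neg_smul, sub_eq_add_neg]
  have hres' : ∀ l : ℂ, l ≠ 0 → -ε ≤ l.re → (1 - ((μ : ℂ) - l) • R₀) * R l = R₀ := by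
    intro l h1 h2
    have h := aux_resid A (hRr l h1 h2) hR0
    rw [sub_mul, one_mul, smul_mul_assoc]
    exact sub_eq_of_eq_add h
  have hev : ∀ᶠ l : ℂ in 𝓝[≠] 0, l ≠ 0 ∧ -ε ≤ l.re := by
    have h1 : ∀ᶠ l : ℂ in 𝓝 0, -ε < l.re :=
      Complex.continuous_re.continuousAt.eventually (lt_mem_nhds (by simpa using hε))
    filter_upwards [self_mem_nhdsWithin, nhdsWithin_le_nhds h1] with l h h' using ⟨h, h'.le⟩
  have hl0 : Tendsto (fun l : ℂ => l) (𝓝[≠] 0) (𝓝 0) := nhdsWithin_le_nhds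
  have hPl : Tendsto (fun l : ℂ => l • R l) (𝓝[≠] 0) (𝓝 P) := by
    obtain ⟨r, hr, B, hB⟩ := hpole
    have hrr : ‖((r / 2 : ℝ) : ℂ)‖ = r / 2 := by
      rw [Complex.norm_real, Real.norm_eq_abs, abs_of_pos (by positivity)]
    obtain ⟨R1, -, hs⟩ := hB ((r / 2 : ℝ) : ℂ) (by
      have : r / 2 ≠ 0 := by positivity
      exact_mod_cast this) (by rw [hrr]; linarith)
    obtain ⟨K, hK⟩ := hs.summable.tendsto_atTop_zero.norm.bddAbove_range
    have hK' : ∀ n, ‖B n‖ * (r / 2) ^ n ≤ K := by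
      intro n
      have := hK ⟨n, rfl⟩
      simp only [norm_smul, norm_pow, hrr] at this
      linarith
    have hbd : ∀ᶠ l : ℂ in 𝓝[≠] 0, ‖l • R l - P‖ ≤ ‖l‖ * (K * 2) := by
      have h1 : ∀ᶠ l : ℂ in 𝓝 0, ‖l‖ < r / 4 :=
        continuous_norm.continuousAt.eventually (gt_mem_nhds (by simpa using by positivity))
      filter_upwards [hev, nhdsWithin_le_nhds h1] with l hl hl4
      obtain ⟨R2, hR2, hs2⟩ := hB l hl.1 (by linarith)
      have hRR : R l = R2 := by simpa using aux_resid A (hRr l hl.1 hl.2) hR2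
      have heq : l • R l - P = l • (R2 - l⁻¹ • P) := by
        rw [smul_sub, smul_smul, mul_inv_cancel₀ hl.1, one_smul, hRR]
      rw [heq, norm_smul]
      gcongr
      have hgeo : HasSum (fun n : ℕ => K * (1 / 2 : ℝ) ^ n) (K * 2) := hasSum_geometric_two.mul_left K
      refine hs2.norm_le_of_bounded hgeo fun n => ?_
      rw [norm_smul, norm_pow]
      calc ‖l‖ ^ n * ‖B n‖ ≤ (r / 4) ^ n * ‖B n‖ := by gcongr
        _ = (‖B n‖ * (r / 2) ^ n) * (1 / 2) ^ n := by
          rw [show r / 4 = (r / 2) * (1 / 2) by ring, mul_pow]; ring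
        _ ≤ K * (1 / 2) ^ n := by gcongr; exact hK' n
    rw [tendsto_iff_norm_sub_tendsto_zero]
    refine squeeze_zero' (Eventually.of_forall fun _ => norm_nonneg _) hbd ?_
    simpa using hl0.norm.mul_const (K * 2)
  obtain ⟨hTP, C, hC, hCn⟩ := aux_alg T M ω μ ε hc hm hTb hμ hμ0 hε R₀ P hR hTR R hres hres' hPl
  have hRP : R₀ * P = (μ : ℂ)⁻¹ • P := by
    have h1 : Tendsto (fun l : ℂ => (1 - ((μ : ℂ) - l) • R₀) * (l • R l)) (𝓝[≠] 0)
        (𝓝 ((1 - ((μ : ℂ) - 0) • R₀) * P)) :=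
      (tendsto_const_nhds.sub ((tendsto_const_nhds.sub hl0).smul_const R₀)).mul hPl
    have h2 : Tendsto (fun l : ℂ => (1 - ((μ : ℂ) - l) • R₀) * (l • R l)) (𝓝[≠] 0)
        (𝓝 ((0 : ℂ) • R₀)) := by
      refine (hl0.smul_const R₀).congr' ?_
      filter_upwards [hev] with l hl
      rw [mul_smul_comm, hres' l hl.1 hl.2]
    have h3 := tendsto_nhds_unique h1 h2
    rw [zero_smul, sub_zero, sub_mul, one_mul, smul_mul_assoc, sub_eq_zero] at h3
    conv_rhs => rw [h3]
    rw [smul_smul, inv_mul_cancel₀ hμC, one_smul]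
  have hTPP : ∀ t, 0 < t → T t * P = P := by
    intro t ht
    ext x
    change T t (P x) = P x
    have hRy : R₀ (P x) = (μ : ℂ)⁻¹ • P x := congrArg (fun f : X →L[ℂ] X => f x) hRP
    have hk := aux_key (fun t => T t (P x)) (M * ‖P x‖) ω μ (hTc (P x)) (fun t ht => by
        calc ‖T t (P x)‖ ≤ ‖T t‖ * ‖P x‖ := (T t).le_opNorm _
          _ ≤ (M * Real.exp (ω * t)) * ‖P x‖ := by gcongr; exact hTb t ht
          _ = _ := by ring) hμ (μ : ℂ)⁻¹ (inv_ne_zero hμC) (fun t ht => by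
        have h1 : T t (R₀ (P x)) = R₀ (T t (P x)) :=
          congrArg (fun f : X →L[ℂ] X => f (P x)) (hTR t ht)
        rw [hRy, map_smul, hR0i] at h1
        rw [h1]
        refine setIntegral_congr_fun measurableSet_Ioi fun s hs => ?_
        change Real.exp (-μ * s) • T s (T t (P x)) = Real.exp (-μ * s) • T (s + t) (P x)
        rw [hm s t hs ht]
        rfl) t ht
    rw [← hR0i, hRy, inv_inv, sub_self, zero_mul, Complex.exp_zero, one_smul] at hk
    exact smul_right_injective X (inv_ne_zero hμC) hk
  have hPP : P * P = P := by
    have h1 : Tendsto (fun l : ℂ => (l • R l) * P) (𝓝[≠] 0) (𝓝 (P * P)) :=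
      hPl.mul tendsto_const_nhds
    refine tendsto_nhds_unique h1 (tendsto_const_nhds.congr' ?_)
    filter_upwards [hev] with l hl
    have h2 : (1 - ((μ : ℂ) - l) • R₀) * P = (l * (μ : ℂ)⁻¹) • P := by
      rw [sub_mul, one_mul, smul_mul_assoc, hRP, smul_smul, sub_mul, mul_inv_cancel₀ hμC, sub_smul,
        one_smul, sub_sub_cancel]
    have h3 : R l * ((1 - ((μ : ℂ) - l) • R₀) * P) = R₀ * P := by
      rw [← mul_assoc, hres l hl.1 hl.2]
    rw [h2, hRP, mul_smul_comm, mul_comm l, mul_smul] at h3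
    have h4 := smul_right_injective (X →L[ℂ] X) (inv_ne_zero hμC) h3
    rw [smul_mul_assoc]
    exact h4.symm
  refine ⟨hTPP, ?_⟩
  have hS1 : T 1 * (1 - P) = T 1 - P := by rw [mul_sub, mul_one, hTPP 1 one_pos]
  rw [hS1] at hCn
  have hPT : ∀ t, 0 < t → P * T t = P := fun t ht => by rw [← hTP t ht, hTPP t ht]
  have hpow : ∀ s, 0 < s → ∀ n : ℕ, T (s + n) - P = (T s - P) * (T 1 - P) ^ n := by
    intro s hs n
    induction n with
    | zero => simp
    | succ n ih =>
      have hsn : 0 < s + n := by positivity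
      rw [pow_succ, ← mul_assoc, ← ih, sub_mul, mul_sub, mul_sub, hPP, hPT 1 one_pos,
        hTPP _ hsn, ← hm _ _ hsn one_pos]
      push_cast
      rw [add_assoc]
      abel
  set K : ℝ := M * Real.exp |ω| + ‖P‖ with hK
  have hK0 : 0 < K := by positivity
  refine ⟨max 1 (K * (C * Real.exp (ε / 2))), ε / 2, le_max_left _ _, by positivity, ?_⟩
  intro t ht
  -- write `t = s + n` with `0 < s ≤ 1`
  obtain ⟨n, s, hs, hs1, rfl⟩ : ∃ (n : ℕ) (s : ℝ), 0 < s ∧ s ≤ 1 ∧ t = s + n := by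
    have h1 : 0 < ⌈t⌉₊ := Nat.ceil_pos.2 ht
    have h2 := Nat.ceil_lt_add_one ht.le
    have h3 := Nat.le_ceil t
    have h4 : ((⌈t⌉₊ - 1 : ℕ) : ℝ) = (⌈t⌉₊ : ℝ) - 1 := by
      rw [Nat.cast_sub h1]; simp
    exact ⟨⌈t⌉₊ - 1, t - (⌈t⌉₊ - 1 : ℕ), by rw [h4]; linarith, by rw [h4]; linarith, by ring⟩
  have hTs : ‖T s - P‖ ≤ K := by
    refine (norm_sub_le _ _).trans ?_
    rw [hK]
    gcongr
    refine (hTb s hs).trans ?_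
    gcongr
    calc ω * s ≤ |ω| * s := by gcongr; exact le_abs_self ω
      _ ≤ |ω| * 1 := by gcongr
      _ = |ω| := mul_one _
  have hexp : Real.exp (-(ε / 2)) ^ n ≤ Real.exp (ε / 2) * Real.exp (-(ε / 2) * (s + n)) := by
    rw [← Real.exp_nat_mul, ← Real.exp_add]
    apply Real.exp_le_exp.2
    nlinarith
  calc ‖T (s + n) - P‖ = ‖(T s - P) * (T 1 - P) ^ n‖ := by rw [hpow s hs n]
    _ ≤ ‖T s - P‖ * ‖(T 1 - P) ^ n‖ := norm_mul_le _ _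
    _ ≤ K * (C * Real.exp (-(ε / 2)) ^ n) := by gcongr; exact hCn n
    _ ≤ K * (C * (Real.exp (ε / 2) * Real.exp (-(ε / 2) * (s + n)))) := by gcongr
    _ = (K * (C * Real.exp (ε / 2))) * Real.exp (-(ε / 2) * (s + n)) := by ring
    _ ≤ _ := by gcongr; exact le_max_right _ _
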